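/- arXiv:2601.05583 — 5 statements merged into one kernel-verified Lean document; each statement's English description precedes it below -/
import Mathlib

section
/- Let X be a set, J : X → X a map, N a natural number, and S ⊆ X a set of initial points. For a map T : X → X define D(T) = { T^[t](x₀) : x₀ ∈ S, 0 ≤ t ≤ N } and D* = { J^[t](x₀) : x₀ ∈ S, 0 ≤ t ≤ N }. Let (T_k)_{k≥0} be a sequence of maps X → X such that for every k, T_{k+1}(x) = J(x) for all x ∈ D(T_k). Then for every k, every x₀ ∈ S, and every t with 0 ≤ t ≤ min(k, N), one has T_k^[t](x₀) = J^[t](x₀). In particular, D(T_k) = D* for all k ≥ N, i.e., the generated datasets converge to the exact dataset in at most N steps. -/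
/-- The dataset generated by iterating the map `T` up to `N` times from initial points in `S`. -/
def generatedDataset {X : Type*} (T : X → X) (N : ℕ) (S : Set X) : Set X :=
  {y | ∃ x₀ ∈ S, ∃ t ≤ N, y = T^[t] x₀}

section

variable {X : Type*}

theorem iterate_eq_iterate_of_forall_lt {f g : X → X} {x : X} {n : ℕ}
    (h : ∀ t < n, f (g^[t] x) = g (g^[t] x)) : f^[n] x = g^[n] x := by
  induction n with
  | zero => rfl
  | succ n ih =>
    calc f^[n + 1] x = f (f^[n] x) := Function.iterate_succ_apply' f n x
      _ = f (g^[n] x) := by rw [ih fun t ht => h t (ht.trans n.lt_succ_self)]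
      _ = g (g^[n] x) := h n n.lt_succ_self
      _ = g^[n + 1] x := (Function.iterate_succ_apply' g n x).symm

variable {N t : ℕ} {S : Set X} {x₀ : X}

theorem iterate_mem_generatedDataset (T : X → X) (hx₀ : x₀ ∈ S) (ht : t ≤ N) :
    T^[t] x₀ ∈ generatedDataset T N S :=
  ⟨x₀, hx₀, t, ht, rfl⟩

theorem generatedDataset_congr {f g : X → X} (h : ∀ x₀ ∈ S, ∀ t ≤ N, f^[t] x₀ = g^[t] x₀) :
    generatedDataset f N S = generatedDataset g N S :=
  Set.ext fun _ => exists_congr fun x₀ => and_congr_right fun hx₀ =>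
    exists_congr fun t => and_congr_right fun ht => by rw [h x₀ hx₀ t ht]

/- Each training phase gains one time step: where the old orbit already follows `J`, the dataset
contains exact states, so the new operator takes the next step correctly. States up to time `N`
teach the step from `N` to `N + 1` as well, hence the bound `N + 1`. -/
theorem iterate_eq_iterate_of_eqOn_generatedDataset {J T T' : X → X}
    (hT' : Set.EqOn T' J (generatedDataset T N S)) (hx₀ : x₀ ∈ S) (htN : t ≤ N + 1)
    (hT : ∀ s < t, T^[s] x₀ = J^[s] x₀) : T'^[t] x₀ = J^[t] x₀ := by
  refine iterate_eq_iterate_of_forall_lt fun s hst => hT' ?_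
  rw [← hT s hst]
  exact iterate_mem_generatedDataset T hx₀ (Nat.le_of_lt_succ (hst.trans_le htN))

theorem iterate_eq_iterate_of_le_phase {J : X → X} {T : ℕ → X → X}
    (hT : ∀ k, Set.EqOn (T (k + 1)) J (generatedDataset (T k) N S)) (hx₀ : x₀ ∈ S) {k : ℕ}
    (htk : t ≤ k) (htN : t ≤ N + 1) : (T k)^[t] x₀ = J^[t] x₀ := by
  induction k generalizing t with
  | zero => rw [Nat.le_zero.mp htk, Function.iterate_zero, Function.iterate_zero]
  | succ k ih =>
    exact iterate_eq_iterate_of_eqOn_generatedDataset (hT k) hx₀ htN fun s hst =>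
      ih (Nat.le_of_lt_succ (hst.trans_le htk)) (hst.le.trans htN)

end

/-- Error-free Learn-to-Evolve: if each operator `T (k+1)` agrees with the exact operator `J`
on the dataset generated by `T k`, then for every `k`, the iterates of `T k` from initial
points agree with those of `J` up to time `min k N`; in particular, the generated datasets
equal the exact dataset for all `k ≥ N`. -/
theorem learn_to_evolve_error_free {X : Type*} (J : X → X) (N : ℕ) (S : Set X)
    (T : ℕ → X → X)
    (hT : ∀ k, ∀ x ∈ generatedDataset (T k) N S, T (k + 1) x = J x) :
    (∀ k, ∀ x₀ ∈ S, ∀ t ≤ min k N, (T k)^[t] x₀ = J^[t] x₀) ∧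
      ∀ k, N ≤ k → generatedDataset (T k) N S = generatedDataset J N S := by
  have iterates_agree : ∀ k, ∀ x₀ ∈ S, ∀ t ≤ min k N, (T k)^[t] x₀ = J^[t] x₀ :=
    fun k x₀ hx₀ t ht =>
      have ⟨htk, htN⟩ := le_min_iff.mp ht
      iterate_eq_iterate_of_le_phase hT hx₀ htk (Nat.le_succ_of_le htN)
  exact ⟨iterates_agree, fun k hNk => generatedDataset_congr fun x₀ hx₀ t htN =>
    iterates_agree k x₀ hx₀ t (le_min (htN.trans hNk) htN)⟩
end

section
/- Let (X, d) be a metric space, λ > 0, γ > 0. Let J : X → X satisfy d(J(x), J(y)) ≤ λ·d(x, y) for all x, y ∈ X, and let (T_k)_{k≥0} be a sequence of maps X → X each satisfying d(T_k(x), T_k(y)) ≤ γ·d(x, y) for all x, y ∈ X. Fix x₀ ∈ X and define trajectories ρ^{k,0} = x₀, ρ^{k,t+1} = T_k(ρ^{k,t}), and ρ^{*,0} = x₀, ρ^{*,t+1} = J(ρ^{*,t}), and training errors ε^{k,t} := d(T_{k+1}(ρ^{k,t}), J(ρ^{k,t})). Then for all k ≥ 1 and all t ≥ 1: d(ρ^{k,t},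 ρ^{*,t}) ≤ (λ + γ)·d(ρ^{k−1,t−1}, ρ^{*,t−1}) + ε^{k−1,t−1} + γ·d(ρ^{k,t−1}, ρ^{*,t−1}). -/
open scoped NNReal

theorem lipschitzWith_dist_apply {X Y : Type*} [PseudoMetricSpace X] [PseudoMetricSpace Y]
    {K L : ℝ≥0} {f g : X → Y} (hf : LipschitzWith K f) (hg : LipschitzWith L g) :
    LipschitzWith (K + L) fun x ↦ dist (f x) (g x) :=
  LipschitzWith.of_le_add_mul _ fun x y ↦
    calc
      dist (f x) (g x) ≤ dist (f x) (f y) + dist (f y) (g y) + dist (g y) (g x) :=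
        dist_triangle4 ..
      _ ≤ K * dist x y + dist (f y) (g y) + L * dist y x := by
        gcongr
        exacts [hf.dist_le_mul x y, hg.dist_le_mul y x]
      _ = dist (f y) (g y) + ↑(K + L) * dist x y := by
        rw [dist_comm y x, NNReal.coe_add]
        ring

theorem learn_to_evolve_recursive_estimate_general {X : Type*} [PseudoMetricSpace X]
    {lam gam : ℝ≥0} {J : X → X} (hJ : LipschitzWith lam J)
    {T : ℕ → X → X} (hT : ∀ k, LipschitzWith gam (T k)) {ρ : ℕ → ℕ → X} {ρs : ℕ → X}
    (hρ : ∀ k t, ρ k (t + 1) = T k (ρ k t)) (hρs : ∀ t, ρs (t + 1) = J (ρs t)) (k t : ℕ) :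
    dist (ρ (k + 1) (t + 1)) (ρs (t + 1)) ≤
      (lam + gam) * dist (ρ k t) (ρs t) + dist (T (k + 1) (ρ k t)) (J (ρ k t)) +
        gam * dist (ρ (k + 1) t) (ρs t) := by
  have propagated_error : dist (T (k + 1) (ρ (k + 1) t)) (T (k + 1) (ρs t)) ≤
      gam * dist (ρ (k + 1) t) (ρs t) :=
    (hT (k + 1)).dist_le_mul _ _
  have operator_error : dist (T (k + 1) (ρs t)) (J (ρs t)) ≤
      dist (T (k + 1) (ρ k t)) (J (ρ k t)) + ↑(gam + lam) * dist (ρs t) (ρ k t) :=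
    (lipschitzWith_dist_apply (hT (k + 1)) hJ).le_add_mul _ _
  calc
    dist (ρ (k + 1) (t + 1)) (ρs (t + 1))
        = dist (T (k + 1) (ρ (k + 1) t)) (J (ρs t)) := by rw [hρ, hρs]
    _ ≤ dist (T (k + 1) (ρ (k + 1) t)) (T (k + 1) (ρs t)) +
        dist (T (k + 1) (ρs t)) (J (ρs t)) := dist_triangle ..
    _ ≤ gam * dist (ρ (k + 1) t) (ρs t) +
        (dist (T (k + 1) (ρ k t)) (J (ρ k t)) + ↑(gam + lam) * dist (ρs t) (ρ k t)) :=
      add_le_add propagated_error operator_error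
    _ = (lam + gam) * dist (ρ k t) (ρs t) + dist (T (k + 1) (ρ k t)) (J (ρ k t)) +
        gam * dist (ρ (k + 1) t) (ρs t) := by
      rw [dist_comm (ρs t), NNReal.coe_add]
      ring

/-- Recursive error estimate for the Learn-to-Evolve iteration: if the exact operator `J`
is `lam`-Lipschitz and each learned operator `T k` is `gam`-Lipschitz, then the distance
between the generated trajectory `ρ` and the exact trajectory `ρs` satisfies
`d(ρ^{k,t}, ρ^{*,t}) ≤ (lam+gam)·d(ρ^{k-1,t-1}, ρ^{*,t-1}) + ε^{k-1,t-1}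
  + gam·d(ρ^{k,t-1}, ρ^{*,t-1})` for all `k ≥ 1`, `t ≥ 1` (here reindexed via `k+1`, `t+1`). -/
theorem learn_to_evolve_recursive_estimate {X : Type*} [MetricSpace X]
    (lam gam : ℝ) (hlam : 0 < lam) (hgam : 0 < gam)
    (J : X → X) (hJ : ∀ x y, dist (J x) (J y) ≤ lam * dist x y)
    (T : ℕ → X → X) (hT : ∀ k x y, dist (T k x) (T k y) ≤ gam * dist x y)
    (x₀ : X) (ρ : ℕ → ℕ → X) (ρs : ℕ → X)
    (hρ0 : ∀ k, ρ k 0 = x₀) (hρ : ∀ k t, ρ k (t + 1) = T k (ρ k t))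
    (hρs0 : ρs 0 = x₀) (hρs : ∀ t, ρs (t + 1) = J (ρs t))
    (ε : ℕ → ℕ → ℝ) (hε : ∀ k t, ε k t = dist (T (k + 1) (ρ k t)) (J (ρ k t))) :
    ∀ k t, dist (ρ (k + 1) (t + 1)) (ρs (t + 1)) ≤
      (lam + gam) * dist (ρ k t) (ρs t) + ε k t + gam * dist (ρ (k + 1) t) (ρs t) := by
  simpa only [hε, Real.coe_toNNReal _ hlam.le, Real.coe_toNNReal _ hgam.le] using
    learn_to_evolve_recursive_estimate_general (.of_dist_le' hJ) (fun k ↦ .of_dist_le' (hT k))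
      hρ hρs
end

section
/- Let (X, d) be a metric space, λ > 0, γ > 0. Let J : X → X satisfy d(J(x), J(y)) ≤ λ·d(x, y) for all x, y ∈ X, and let (T_k)_{k≥0} be a sequence of maps X → X each satisfying d(T_k(x), T_k(y)) ≤ γ·d(x, y) for all x, y ∈ X. Fix x₀ ∈ X and define ρ^{k,0} = x₀, ρ^{k,t+1} = T_k(ρ^{k,t}), ρ^{*,0} = x₀, ρ^{*,t+1} = J(ρ^{*,t}), and ε^{k,t} := d(T_{k+1}(ρ^{k,t}), J(ρ^{k,t})). Fix t ≥ 1. If for every s with 0 ≤ s ≤ t−1 the training errors satisfy ε^{k,s} → 0 as k → ∞, then d(ρ^{k,t}, ρ^{*,t}) → 0 as k → ∞. -/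
open Filter Topology

/-!
The error at iteration `k` compares `T (k + 1)` with `J` at the point `ρ k s` of the *previous*
trajectory, whereas the next generated point is `ρ (k + 1) (s + 1) = T (k + 1) (ρ (k + 1) s)`.
By induction on `s`, both `ρ k s` and `ρ (k + 1) s` tend to `ρs s`, so equicontinuity makes the
values of `T (k + 1)` at these two points asymptotically equal, and continuity of `J` at `ρs s`
identifies the limit as `J (ρs s)`.
-/

open scoped Uniformity

section Equicontinuity

variable {ι κ X Y : Type*} [TopologicalSpace X] [UniformSpace Y]
  {F : ι → X → Y} {x : X} {l : Filter κ} {u v : κ → X} (φ : κ → ι)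

theorem tendsto_uniformity_of_equicontinuousAt (hF : EquicontinuousAt F x)
    (hu : Tendsto u l (𝓝 x)) (hv : Tendsto v l (𝓝 x)) :
    Tendsto (fun a => (F (φ a) (u a), F (φ a) (v a))) l (𝓤 Y) := by
  have from_limit {w : κ → X} (hw : Tendsto w l (𝓝 x)) :
      Tendsto (fun a => (F (φ a) x, F (φ a) (w a))) l (𝓤 Y) :=
    fun U hU => (hw.eventually (hF U hU)).mono fun a ha => ha (φ a)
  exact (from_limit hu).uniformity_symm.uniformity_trans (from_limit hv)

theorem tendsto_apply_of_equicontinuousAt_of_tendsto_uniformity {G : X → Y}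
    (hF : EquicontinuousAt F x) (hG : ContinuousAt G x)
    (hu : Tendsto u l (𝓝 x)) (hv : Tendsto v l (𝓝 x))
    (hFG : Tendsto (fun a => (F (φ a) (v a), G (v a))) l (𝓤 Y)) :
    Tendsto (fun a => F (φ a) (u a)) l (𝓝 (G x)) := by
  have hFuv := tendsto_uniformity_of_equicontinuousAt φ hF hu hv
  have hGv := Uniform.tendsto_nhds_left.1 (hG.tendsto.comp hv)
  exact Uniform.tendsto_nhds_left.2 ((hFuv.uniformity_trans hFG).uniformity_trans hGv)

end Equicontinuity

theorem learn_to_evolve_convergence_general {X : Type*} [UniformSpace X]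
    {J : X → X} {T : ℕ → X → X} {ρ : ℕ → ℕ → X} {ρs : ℕ → X} {t : ℕ}
    (hJ : ∀ s < t, ContinuousAt J (ρs s)) (hT : ∀ s < t, EquicontinuousAt T (ρs s))
    (hρ0 : Tendsto (fun k => ρ k 0) atTop (𝓝 (ρs 0)))
    (hρ : ∀ k s, ρ k (s + 1) = T k (ρ k s)) (hρs : ∀ s, ρs (s + 1) = J (ρs s))
    (herr : ∀ s < t, Tendsto (fun k => (T (k + 1) (ρ k s), J (ρ k s))) atTop (𝓤 X)) :
    Tendsto (fun k => ρ k t) atTop (𝓝 (ρs t)) := by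
  induction t with
  | zero => exact hρ0
  | succ s ih =>
    have hs : Tendsto (fun k => ρ k s) atTop (𝓝 (ρs s)) :=
      ih (fun r hr => hJ r (hr.trans s.lt_succ_self)) (fun r hr => hT r (hr.trans s.lt_succ_self))
        (fun r hr => herr r (hr.trans s.lt_succ_self))
    have hs_next : Tendsto (fun k => ρ (k + 1) s) atTop (𝓝 (ρs s)) :=
      hs.comp (tendsto_add_atTop_nat 1)
    rw [← tendsto_add_atTop_iff_nat 1]
    simp only [hρ, hρs]
    exact tendsto_apply_of_equicontinuousAt_of_tendsto_uniformity (· + 1)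
      (hT s s.lt_succ_self) (hJ s s.lt_succ_self) hs_next hs (herr s s.lt_succ_self)

/-- Convergence of the Learn-to-Evolve trajectories: if the exact operator `J` is
`lam`-Lipschitz, each learned operator `T k` is `gam`-Lipschitz, and the training errors
`ε k s` tend to `0` as `k → ∞` for every time `s < t`, then the generated trajectory point
at time `t` converges to the exact trajectory point at time `t`. -/
theorem learn_to_evolve_convergence {X : Type*} [MetricSpace X]
    (lam gam : ℝ) (hlam : 0 < lam) (hgam : 0 < gam)
    (J : X → X) (hJ : ∀ x y, dist (J x) (J y) ≤ lam * dist x y)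
    (T : ℕ → X → X) (hT : ∀ k x y, dist (T k x) (T k y) ≤ gam * dist x y)
    (x₀ : X) (ρ : ℕ → ℕ → X) (ρs : ℕ → X)
    (hρ0 : ∀ k, ρ k 0 = x₀) (hρ : ∀ k t, ρ k (t + 1) = T k (ρ k t))
    (hρs0 : ρs 0 = x₀) (hρs : ∀ t, ρs (t + 1) = J (ρs t))
    (ε : ℕ → ℕ → ℝ) (hε : ∀ k t, ε k t = dist (T (k + 1) (ρ k t)) (J (ρ k t)))
    (t : ℕ) (ht : 1 ≤ t)
    (herr : ∀ s, s < t → Tendsto (fun k => ε k s) atTop (𝓝 0)) :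
    Tendsto (fun k => dist (ρ k t) (ρs t)) atTop (𝓝 0) := by
  have J_continuous : Continuous J := (LipschitzWith.of_dist_le' hJ).continuous
  have T_equicontinuous : Equicontinuous T :=
    (LipschitzWith.uniformEquicontinuous T _
      fun k => LipschitzWith.of_dist_le' (hT k)).equicontinuous
  exact tendsto_iff_dist_tendsto_zero.1 <| learn_to_evolve_convergence_general
    (fun _ _ => J_continuous.continuousAt) (fun s _ => T_equicontinuous (ρs s))
    (by simp only [hρ0, hρs0, tendsto_const_nhds]) hρ hρs
    (fun s hs => tendsto_uniformity_iff_dist_tendsto_zero.2 (by simpa only [hε] using herr s hs))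
end

section
/- Let n ≥ 1 and let C be a real n×n matrix such that I + C is symmetric positive definite and the operator norm ‖C‖ (induced by the Euclidean norm on ℝⁿ) satisfies ‖C‖ < 1. Then |det(I + C) − e^{tr(C)}| ≤ e^{tr(C)} · n‖C‖² / (1 − ‖C‖). -/
/-- The operator norm of a real square matrix induced by the Euclidean norm on `ℝⁿ`. -/
noncomputable def euclideanOpNorm {n : ℕ} (C : Matrix (Fin n) (Fin n) ℝ) : ℝ :=
  ‖Matrix.toEuclideanCLM (𝕜 := ℝ) C‖

/-!
For Hermitian `A` with eigenvalues `xᵢ`, `det (1 + A) = ∏ (1 + xᵢ)` and `exp (tr A) = ∏ exp xᵢ`.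
If `|xᵢ| ≤ c < 1`, then `xᵢ - c² / (1 - c) ≤ log (1 + xᵢ) ≤ xᵢ`; multiplying the exponentials of
these bounds shows that `det (1 + A)` lies between `exp (tr A) * exp (-n c² / (1 - c))` and
`exp (tr A)`, and `1 - exp (-t) ≤ t` bounds the gap.
-/

section ProdOneAdd

variable {ι : Type*} {s : Finset ι} {x : ι → ℝ} {c : ℝ}

lemma exp_sub_sq_div_one_add_le_one_add {t : ℝ} (ht : -1 < t) :
    Real.exp (t - t ^ 2 / (1 + t)) ≤ 1 + t := by
  have hpos : 0 < 1 + t := by linarith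
  rw [← Real.le_log_iff_exp_le hpos]
  calc t - t ^ 2 / (1 + t) = 1 - (1 + t)⁻¹ := by field_simp; ring
    _ ≤ Real.log (1 + t) := Real.one_sub_inv_le_log_of_pos hpos

lemma exp_sub_sq_div_one_sub_le_one_add {t : ℝ} (hc : c < 1) (ht : |t| ≤ c) :
    Real.exp (t - c ^ 2 / (1 - c)) ≤ 1 + t := by
  obtain ⟨hct, htc⟩ := abs_le.mp ht
  have hsq : t ^ 2 / (1 + t) ≤ c ^ 2 / (1 - c) :=
    div_le_div₀ (sq_nonneg c) (sq_le_sq' hct htc) (sub_pos.mpr hc) (by linarith)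
  calc Real.exp (t - c ^ 2 / (1 - c)) ≤ Real.exp (t - t ^ 2 / (1 + t)) := by gcongr
    _ ≤ 1 + t := exp_sub_sq_div_one_add_le_one_add (by linarith)

lemma prod_one_add_le_exp_sum (hx : ∀ i ∈ s, -1 ≤ x i) :
    ∏ i ∈ s, (1 + x i) ≤ Real.exp (∑ i ∈ s, x i) := by
  rw [Real.exp_sum]
  refine Finset.prod_le_prod (fun i hi ↦ by linarith [hx i hi]) fun i _ ↦ ?_
  rw [add_comm]
  exact Real.add_one_le_exp (x i)

lemma exp_sum_mul_one_sub_le_prod_one_add (hc : c < 1) (hx : ∀ i ∈ s, |x i| ≤ c) :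
    Real.exp (∑ i ∈ s, x i) * (1 - s.card * (c ^ 2 / (1 - c))) ≤ ∏ i ∈ s, (1 + x i) := by
  calc Real.exp (∑ i ∈ s, x i) * (1 - s.card * (c ^ 2 / (1 - c)))
      ≤ Real.exp (∑ i ∈ s, x i) * Real.exp (-(s.card * (c ^ 2 / (1 - c)))) := by
        gcongr
        exact Real.one_sub_le_exp_neg _
    _ = ∏ i ∈ s, Real.exp (x i - c ^ 2 / (1 - c)) := by
        rw [← Real.exp_add, ← Real.exp_sum, Finset.sum_sub_distrib, Finset.sum_const,
          nsmul_eq_mul, ← sub_eq_add_neg]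
    _ ≤ ∏ i ∈ s, (1 + x i) :=
        Finset.prod_le_prod (fun _ _ ↦ (Real.exp_pos _).le) fun i hi ↦
          exp_sub_sq_div_one_sub_le_one_add hc (hx i hi)

lemma abs_prod_one_add_sub_exp_sum_le (hc : c < 1) (hx : ∀ i ∈ s, |x i| ≤ c) :
    |∏ i ∈ s, (1 + x i) - Real.exp (∑ i ∈ s, x i)| ≤
      Real.exp (∑ i ∈ s, x i) * (s.card * c ^ 2) / (1 - c) := by
  have upper : ∏ i ∈ s, (1 + x i) ≤ Real.exp (∑ i ∈ s, x i) :=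
    prod_one_add_le_exp_sum fun i hi ↦ by linarith [(abs_le.mp (hx i hi)).1]
  have lower := exp_sum_mul_one_sub_le_prod_one_add hc hx
  rw [abs_of_nonpos (sub_nonpos.mpr upper), mul_div_assoc, mul_div_assoc]
  linarith

end ProdOneAdd

section Hermitian

open scoped Matrix.Norms.L2Operator

variable {ι 𝕜 : Type*} [RCLike 𝕜] [Fintype ι] [DecidableEq ι] {A : Matrix ι ι 𝕜}

lemma det_one_add_eq_prod_one_add_eigenvalues (hA : A.IsHermitian) :
    (1 + A).det = ∏ i, (1 + (hA.eigenvalues i : 𝕜)) := by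
  have hconj : 1 + A = Unitary.conjStarAlgAut 𝕜 _ hA.eigenvectorUnitary
      (Matrix.diagonal fun i ↦ 1 + (hA.eigenvalues i : 𝕜)) := by
    rw [← Matrix.diagonal_add, Matrix.diagonal_one, map_add, map_one]
    exact congrArg (1 + ·) hA.spectral_theorem
  rw [hconj, Unitary.conjStarAlgAut_apply, Matrix.det_mul_right_comm,
    Unitary.mul_star_self_of_mem hA.eigenvectorUnitary.2, one_mul, Matrix.det_diagonal]

lemma abs_eigenvalues_le_l2_opNorm (hA : A.IsHermitian) (i : ι) :
    |hA.eigenvalues i| ≤ ‖A‖ := by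
  have : Nonempty ι := ⟨i⟩
  have hmem := hA.eigenvalues_mem_spectrum_real i
  rw [← spectrum.algebraMap_mem_iff 𝕜] at hmem
  simpa using spectrum.norm_le_norm_of_mem hmem

theorem det_sub_exp_trace_bound_general (hA : A.IsHermitian) (hnorm : ‖A‖ < 1) :
    ‖(1 + A).det - (Real.exp (RCLike.re A.trace) : 𝕜)‖ ≤
      Real.exp (RCLike.re A.trace) * (Fintype.card ι * ‖A‖ ^ 2) / (1 - ‖A‖) := by
  have htrace : RCLike.re A.trace = ∑ i, hA.eigenvalues i := by
    simp [hA.trace_eq_sum_eigenvalues]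
  have hdet : (1 + A).det = ((∏ i, (1 + hA.eigenvalues i) : ℝ) : 𝕜) := by
    simp [det_one_add_eq_prod_one_add_eigenvalues hA]
  rw [hdet, htrace, ← RCLike.ofReal_sub, RCLike.norm_ofReal]
  exact abs_prod_one_add_sub_exp_sum_le hnorm fun i _ ↦ abs_eigenvalues_le_l2_opNorm hA i

end Hermitian

/-- Quantitative form of Lemma 4.1: if `I + C` is symmetric positive definite and
`‖C‖ < 1` in the Euclidean operator norm, then
`|det (I + C) − e^{tr C}| ≤ e^{tr C} · n‖C‖² / (1 − ‖C‖)`. -/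
theorem det_sub_exp_trace_bound {n : ℕ} (hn : 1 ≤ n) (C : Matrix (Fin n) (Fin n) ℝ)
    (hpos : ((1 : Matrix (Fin n) (Fin n) ℝ) + C).PosDef)
    (hnorm : euclideanOpNorm C < 1) :
    |((1 : Matrix (Fin n) (Fin n) ℝ) + C).det - Real.exp C.trace| ≤
      Real.exp C.trace * (n * euclideanOpNorm C ^ 2) / (1 - euclideanOpNorm C) := by
  have hC : C.IsHermitian := by simpa using hpos.isHermitian.sub Matrix.isHermitian_one
  simpa [euclideanOpNorm, Matrix.cstar_norm_def] using det_sub_exp_trace_bound_general hC hnorm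
end

section
/- Let n ≥ 1 and let C be a real n×n matrix such that I + C is symmetric positive definite and the operator norm ‖C‖ (induced by the Euclidean norm on ℝⁿ) satisfies ‖C‖ < 1. Then |log det(I + C) − tr(C)| ≤ n‖C‖² / (1 − ‖C‖). In particular, tr(C) − n‖C‖²/(1−‖C‖) ≤ log det(I + C) ≤ tr(C). -/
/-!
For a Hermitian matrix `A` with eigenvalues `μᵢ`, both `log det A = ∑ log μᵢ` and
`tr (A - 1) = ∑ (μᵢ - 1)` are sums over the spectrum, so everything reduces to comparing `log x`
with `x - 1`: the upper bound is `log x ≤ x - 1`, and the quadratic error is the remainder of the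
logarithmic series on `|x - 1| ≤ ‖A - 1‖ < 1`, an interval that contains every `μᵢ`.
-/

theorem abs_log_sub_sub_one_le {x c : ℝ} (hx : |x - 1| ≤ c) (hc : c < 1) :
    |Real.log x - (x - 1)| ≤ c ^ 2 / (1 - c) := by
  have hx1 : |1 - x| ≤ c := by rwa [abs_sub_comm]
  calc |Real.log x - (x - 1)|
      = |(1 - x) + Real.log (1 - (1 - x))| := by ring_nf
    _ ≤ |1 - x| ^ 2 / (1 - |1 - x|) := by
        simpa using Real.abs_log_sub_add_sum_range_le (hx1.trans_lt hc) 1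
    _ ≤ c ^ 2 / (1 - c) :=
        div_le_div₀ (sq_nonneg c) (by gcongr) (sub_pos.mpr hc) (by gcongr)

section

open Matrix
open scoped ComplexOrder Matrix.Norms.L2Operator

variable {𝕜 n : Type*} [RCLike 𝕜] [Fintype n] [DecidableEq n] {A : Matrix n n 𝕜}

theorem abs_eigenvalues_sub_le_l2_opNorm (hA : A.IsHermitian) (r : ℝ) (i : n) :
    |hA.eigenvalues i - r| ≤ ‖A - algebraMap ℝ (Matrix n n 𝕜) r‖ := by
  have : Nonempty n := ⟨i⟩
  have hmem : hA.eigenvalues i - r ∈ spectrum ℝ (A - algebraMap ℝ (Matrix n n 𝕜) r) := by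
    rw [← spectrum.sub_singleton_eq]
    exact Set.sub_mem_sub (hA.eigenvalues_mem_spectrum_real i) rfl
  simpa only [norm_algebraMap', Real.norm_eq_abs] using
    spectrum.norm_le_norm_of_mem (spectrum.algebraMap_mem 𝕜 hmem)

theorem abs_eigenvalues_sub_one_le_l2_opNorm (hA : A.IsHermitian) (i : n) :
    |hA.eigenvalues i - 1| ≤ ‖A - 1‖ := by
  simpa only [map_one] using abs_eigenvalues_sub_le_l2_opNorm hA 1 i

theorem posDef_of_l2_opNorm_sub_one_lt_one (hA : A.IsHermitian) (hA1 : ‖A - 1‖ < 1) :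
    A.PosDef := by
  refine hA.posDef_iff_eigenvalues_pos.mpr fun i ↦ ?_
  linarith [(abs_le.mp (abs_eigenvalues_sub_one_le_l2_opNorm hA i)).1]

-- The determinant and trace of a Hermitian matrix are real, so `re` below only changes the type.
theorem re_trace_sub_one_eq_sum_eigenvalues (hA : A.IsHermitian) :
    RCLike.re (A - 1).trace = ∑ i, (hA.eigenvalues i - 1) := by
  simp [trace_sub, hA.trace_eq_sum_eigenvalues]

theorem log_re_det_eq_sum_log_eigenvalues (hA : A.IsHermitian) (hdet : A.det ≠ 0) :
    Real.log (RCLike.re A.det) = ∑ i, Real.log (hA.eigenvalues i) := by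
  rw [hA.det_eq_prod_eigenvalues, ← RCLike.ofReal_prod] at hdet ⊢
  rw [RCLike.ofReal_re,
    Real.log_prod (Finset.prod_ne_zero_iff.mp (RCLike.ofReal_ne_zero.mp hdet))]

theorem log_re_det_le_re_trace_sub_one (hA : A.PosDef) :
    Real.log (RCLike.re A.det) ≤ RCLike.re (A - 1).trace := by
  rw [log_re_det_eq_sum_log_eigenvalues hA.isHermitian hA.det_pos.ne',
    re_trace_sub_one_eq_sum_eigenvalues hA.isHermitian]
  exact Finset.sum_le_sum fun i _ ↦ Real.log_le_sub_one_of_pos (hA.eigenvalues_pos i)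

theorem abs_log_re_det_sub_re_trace_sub_one_le (hA : A.IsHermitian) (hA1 : ‖A - 1‖ < 1) :
    |Real.log (RCLike.re A.det) - RCLike.re (A - 1).trace| ≤
      Fintype.card n * ‖A - 1‖ ^ 2 / (1 - ‖A - 1‖) := by
  have hdet : A.det ≠ 0 := (posDef_of_l2_opNorm_sub_one_lt_one hA hA1).det_pos.ne'
  rw [log_re_det_eq_sum_log_eigenvalues hA hdet,
    re_trace_sub_one_eq_sum_eigenvalues hA, ← Finset.sum_sub_distrib]
  calc |∑ i, (Real.log (hA.eigenvalues i) - (hA.eigenvalues i - 1))|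
      ≤ ∑ i, |Real.log (hA.eigenvalues i) - (hA.eigenvalues i - 1)| :=
        Finset.abs_sum_le_sum_abs _ _
    _ ≤ ∑ _i : n, ‖A - 1‖ ^ 2 / (1 - ‖A - 1‖) :=
        Finset.sum_le_sum fun i _ ↦
          abs_log_sub_sub_one_le (abs_eigenvalues_sub_one_le_l2_opNorm hA i) hA1
    _ = Fintype.card n * ‖A - 1‖ ^ 2 / (1 - ‖A - 1‖) := by
        rw [Finset.sum_const, Finset.card_univ, nsmul_eq_mul, mul_div_assoc]

theorem log_det_sub_trace_bound_general (C : Matrix n n 𝕜) (hC : C.IsHermitian)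
    (hnorm : ‖C‖ < 1) :
    |Real.log (RCLike.re (1 + C).det) - RCLike.re C.trace| ≤
        Fintype.card n * ‖C‖ ^ 2 / (1 - ‖C‖) ∧
      RCLike.re C.trace - Fintype.card n * ‖C‖ ^ 2 / (1 - ‖C‖) ≤
        Real.log (RCLike.re (1 + C).det) ∧
      Real.log (RCLike.re (1 + C).det) ≤ RCLike.re C.trace := by
  have hA : (1 + C).IsHermitian := IsHermitian.add isHermitian_one hC
  have hsub : 1 + C - 1 = C := add_sub_cancel_left 1 C
  have hA1 : ‖1 + C - 1‖ < 1 := by rwa [hsub]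
  have habs := abs_log_re_det_sub_re_trace_sub_one_le hA hA1
  have hupper := log_re_det_le_re_trace_sub_one (posDef_of_l2_opNorm_sub_one_lt_one hA hA1)
  rw [hsub] at habs hupper
  exact ⟨habs, sub_le_of_abs_sub_le_left habs, hupper⟩

end

/-- Logarithmic form of the estimate in Lemma 4.1: if `I + C` is symmetric positive definite
and `‖C‖ < 1` in the Euclidean operator norm, then
`|log det (I + C) − tr C| ≤ n‖C‖² / (1 − ‖C‖)`; in particular
`tr C − n‖C‖²/(1−‖C‖) ≤ log det (I + C) ≤ tr C`. -/
theorem log_det_sub_trace_bound {n : ℕ} (hn : 1 ≤ n) (C : Matrix (Fin n) (Fin n) ℝ)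
    (hpos : ((1 : Matrix (Fin n) (Fin n) ℝ) + C).PosDef)
    (hnorm : euclideanOpNorm C < 1) :
    |Real.log ((1 : Matrix (Fin n) (Fin n) ℝ) + C).det - C.trace| ≤
        n * euclideanOpNorm C ^ 2 / (1 - euclideanOpNorm C) ∧
      C.trace - n * euclideanOpNorm C ^ 2 / (1 - euclideanOpNorm C) ≤
        Real.log ((1 : Matrix (Fin n) (Fin n) ℝ) + C).det ∧
      Real.log ((1 : Matrix (Fin n) (Fin n) ℝ) + C).det ≤ C.trace := by
  have hC : C.IsHermitian := by simpa using hpos.isHermitian.sub Matrix.isHermitian_one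
  simpa [euclideanOpNorm, Matrix.l2_opNorm_toEuclideanCLM] using
    log_det_sub_trace_bound_general C hC hnorm
end
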